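/- arXiv:0911.3624 — 8 statements merged into one kernel-verified Lean document; each statement's English description precedes it below -/
import Mathlib

section
/- Let c, λ1, λ2, λk be real numbers with c ≠ 0, λ1 ≠ λ2, λk ≠ λ1 and λk ≠ λ2. Suppose there exist real numbers b1, b2 such that b1² + b2² = 1, 3c(λ2−λk)b1²/(4(λ1−λk)) + 3c(λ1−λk)b2²/(4(λ2−λk)) = −c/4 − λ1(λ2−λk) − λ2(λ1−λk), and (c/4 − 3c(λk−λ2)/(4(λk−λ1)))b1² − (c/2)b2² = (λ2−λ1)λk + λ1(λ2−λk). Then −12λk² + 8λ1λk + 8λ2λk + c − 4λ1λ2 = 0. -/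
/-! With `p = l1 - lk`, `q = l2 - lk` nonzero, clear denominators and substitute `b2² = 1 - b1²`.
The two equations become linear in `b1²`, with coefficients `-3c(p² - q²)` and `3c(p - q)`,
so adding `p + q` times the latter to the former eliminates `b1²`. What remains is, up to sign,
`p * (q - p)` times the claimed polynomial, and `q - p = l2 - l1 ≠ 0`. -/


/-- Algebraic compatibility condition (vanishing of an order-three minor) for the
linear system in `b1², b2²` arising from the Codazzi equations applied to
`U1, U2, A_k` of a real hypersurface with constant principal curvatures. -/
theorem stmt_0 (c l1 l2 lk : ℝ) (hc : c ≠ 0) (h12 : l1 ≠ l2) (hk1 : lk ≠ l1)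
    (hk2 : lk ≠ l2)
    (h : ∃ b1 b2 : ℝ, b1 ^ 2 + b2 ^ 2 = 1 ∧
      3 * c * (l2 - lk) * b1 ^ 2 / (4 * (l1 - lk))
        + 3 * c * (l1 - lk) * b2 ^ 2 / (4 * (l2 - lk))
        = -c / 4 - l1 * (l2 - lk) - l2 * (l1 - lk) ∧
      (c / 4 - 3 * c * (lk - l2) / (4 * (lk - l1))) * b1 ^ 2 - (c / 2) * b2 ^ 2
        = (l2 - l1) * lk + l1 * (l2 - lk)) :
    -12 * lk ^ 2 + 8 * l1 * lk + 8 * l2 * lk + c - 4 * l1 * l2 = 0 := by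
  obtain ⟨b1, b2, h1, h2, h3⟩ := h
  have hp : l1 - lk ≠ 0 := sub_ne_zero.mpr hk1.symm
  have hq : l2 - lk ≠ 0 := sub_ne_zero.mpr hk2.symm
  have hp' : lk - l1 ≠ 0 := sub_ne_zero.mpr hk1
  have hd : l2 - l1 ≠ 0 := sub_ne_zero.mpr h12.symm
  have hy : b2 ^ 2 = 1 - b1 ^ 2 := by linarith
  rw [hy] at h2 h3
  generalize b1 ^ 2 = x at h2 h3
  have e2 : 3 * c * (l2 - lk) ^ 2 * x + 3 * c * (l1 - lk) ^ 2 * (1 - x)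
      = 4 * (l1 - lk) * (l2 - lk) * (-c / 4 - l1 * (l2 - lk) - l2 * (l1 - lk)) := by
    rw [← h2]; field_simp
  have e3 : (c * (l1 - lk) - 3 * c * (l2 - lk)) * x - 2 * c * (l1 - lk) * (1 - x)
      = 4 * (l1 - lk) * ((l2 - l1) * lk + l1 * (l2 - lk)) := by
    rw [← h3]; field_simp; ring
  have key : (l1 - lk) * (l2 - l1) *
      (-12 * lk ^ 2 + 8 * l1 * lk + 8 * l2 * lk + c - 4 * l1 * l2) = 0 := by
    linear_combination -e2 - ((l1 - lk) + (l2 - lk)) * e3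
  exact (mul_eq_zero.mp key).resolve_left (mul_ne_zero hp hd)
end

section
/- Let c, λ1, λ2, λr, λs be real numbers with c ≠ 0, λ1 ≠ λ2, λr ≠ λs, λr ≠ λ1 and λs ≠ λ1. Suppose there exist real numbers b1, b2 such that b1² + b2² = 1 and, for each k ∈ {r, s}, (c/4 − 3c(λk−λ2)/(4(λk−λ1)))b1² − (c/2)b2² = (λ2−λ1)λk + λ1(λ2−λk). Then 4λ1² − 4λrλ1 − 4λsλ1 + c + 2λ2λr + 2λ2λs = 0. -/
/-- Substituting `y = 1 - x` makes the non-constant part of the left side of the equation for `k`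
collapse to `-3c(l1 - l2)x / (4(k - l1))`. Multiplying by `k - l1` therefore gives a quadratic in
`k` whose value does not depend on `k`. -/
lemma codazzi_cleared {c l1 l2 k x y : ℝ} (hk : k ≠ l1) (hxy : x + y = 1)
    (h : (c / 4 - 3 * c * (k - l2) / (4 * (k - l1))) * x - (c / 2) * y
      = (l2 - l1) * k + l1 * (l2 - k)) :
    (c / 2 + (l2 - 2 * l1) * k + l1 * l2) * (k - l1) = -(3 * c * (l1 - l2) * x / 4) := by
  have hd : k - l1 ≠ 0 := sub_ne_zero.mpr hk
  obtain rfl : y = 1 - x := by linarith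
  field_simp at h
  linarith

/-- Algebraic compatibility condition (vanishing of an order-three minor) for the
linear system in `b1², b2²` given by the Codazzi equation applied to
`A_k, U1, U2` for `k = r` and `k = s` together with `b1² + b2² = 1`. -/
theorem stmt_1 (c l1 l2 lr ls : ℝ) (hc : c ≠ 0) (h12 : l1 ≠ l2) (hrs : lr ≠ ls)
    (hr1 : lr ≠ l1) (hs1 : ls ≠ l1)
    (h : ∃ b1 b2 : ℝ, b1 ^ 2 + b2 ^ 2 = 1 ∧
      (∀ lk, lk = lr ∨ lk = ls →
        (c / 4 - 3 * c * (lk - l2) / (4 * (lk - l1))) * b1 ^ 2 - (c / 2) * b2 ^ 2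
          = (l2 - l1) * lk + l1 * (l2 - lk))) :
    4 * l1 ^ 2 - 4 * lr * l1 - 4 * ls * l1 + c + 2 * l2 * lr + 2 * l2 * ls = 0 := by
  obtain ⟨b1, b2, hb, h⟩ := h
  have hr := codazzi_cleared hr1 hb (h lr (Or.inl rfl))
  have hs := codazzi_cleared hs1 hb (h ls (Or.inr rfl))
  -- The quadratic of `codazzi_cleared` agrees at `lr` and `ls`; its divided difference is the claim.
  apply mul_left_cancel₀ (sub_ne_zero.mpr hrs)
  linear_combination 2 * hr - 2 * hs
end

section
/- Let c, λ1, λ2, λr, λs be real numbers with c ≠ 0, such that λ1, λ2, λr, λs are pairwise distinct. Then there do not exist real numbers b1, b2 with b1² + b2² = 1 satisfying, for each k ∈ {r, s}, both 3c(λ2−λk)b1²/(4(λ1−λk)) + 3c(λ1−λk)b2²/(4(λ2−λk)) = −c/4 − λ1(λ2−λk) − λ2(λ1−λk) and (c/4 − 3c(λk−λ2)/(4(λk−λ1)))b1² − (c/2)b2² = (λ2−λ1)λk + λ1(λ2−λk). -/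
/-!
Put `u = l1 - lk`, `d = l2 - l1`, `x = b1 ^ 2`, so that `b2 ^ 2 = 1 - x`. After clearing denominators,
the second equation and the sum of both equations become two polynomial equations of degree at most
two in `u` (`quadratics_of_system`), whose coefficients do not depend on `k`. They share the two
distinct roots `l1 - lr` and `l1 - ls`, so by Vieta their coefficients are proportional. With
`α = d - l1` this forces `c = -4/3 (l1 ^ 2 + l1 d + d ^ 2)` and `3 c d x / 4 = -α ^ 3 / 9`, and the
first quadratic turns into `α (u + α / 3) ^ 2 = 0`. If `α ≠ 0` it has only one root; if `α = 0`
the second quadratic becomes `3 d u ^ 2 = 0`, which has only the excluded root `u = 0`.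
-/

/-- The two equations for one value `lk`, without denominators, in terms of
`u = l1 - lk`, `d = l2 - l1` and `x = b1 ^ 2`, `y = b2 ^ 2`. -/
lemma quadratics_of_system {c l1 d u x y : ℝ} (hu : u ≠ 0) (hv : u + d ≠ 0) (hxy : x + y = 1)
    (e1 : 3 * c * (u + d) * x / (4 * u) + 3 * c * u * y / (4 * (u + d))
      = -c / 4 - l1 * (u + d) - (l1 + d) * u)
    (e2 : (c / 4 - 3 * c * (-(u + d)) / (4 * (-u))) * x - (c / 2) * y
      = d * (l1 - u) + l1 * (u + d)) :
    (d - l1) * u ^ 2 - (c / 2 + 2 * l1 * d) * u - 3 * c * d * x / 4 = 0 ∧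
    (l1 + 2 * d) * u ^ 2 + (2 * d ^ 2 + c / 2) * u
      + d * (-l1 * d - c / 4 + 3 * c * x / 4) = 0 := by
  obtain rfl : y = 1 - x := by linarith
  -- the first quadratic is `u` times the second equation
  have k1 : (d - l1) * u ^ 2 - (c / 2 + 2 * l1 * d) * u - 3 * c * d * x / 4
      = u * (((c / 4 - 3 * c * (-(u + d)) / (4 * (-u))) * x - (c / 2) * (1 - x))
        - (d * (l1 - u) + l1 * (u + d))) := by
    field_simp
    ring
  -- the second one is `u + d` times the sum of both equations
  have k2 : (l1 + 2 * d) * u ^ 2 + (2 * d ^ 2 + c / 2) * u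
      + d * (-l1 * d - c / 4 + 3 * c * x / 4)
      = (u + d) * ((3 * c * (u + d) * x / (4 * u) + 3 * c * u * (1 - x) / (4 * (u + d))
          - (-c / 4 - l1 * (u + d) - (l1 + d) * u))
        + (((c / 4 - 3 * c * (-(u + d)) / (4 * (-u))) * x - (c / 2) * (1 - x))
        - (d * (l1 - u) + l1 * (u + d)))) := by
    field_simp
    ring
  exact ⟨by rw [k1, e2]; ring, by rw [k2, e1, e2]; ring⟩

/-- Vieta: quadratics (possibly degenerate) with two common roots have proportional coefficients. -/
lemma coeffs_of_two_roots {a b e a' b' e' u w : ℝ} (huw : u ≠ w)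
    (h1 : a * u ^ 2 + b * u + e = 0) (h2 : a * w ^ 2 + b * w + e = 0)
    (h1' : a' * u ^ 2 + b' * u + e' = 0) (h2' : a' * w ^ 2 + b' * w + e' = 0) :
    a * b' = a' * b ∧ a * e' = a' * e := by
  have hd : u - w ≠ 0 := sub_ne_zero.mpr huw
  have hs : b = -(a * (u + w)) := by
    apply mul_left_cancel₀ hd
    linear_combination h1 - h2
  have hs' : b' = -(a' * (u + w)) := by
    apply mul_left_cancel₀ hd
    linear_combination h1' - h2'
  have hp : e = a * (u * w) := by rw [hs] at h1; linear_combination h1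
  have hp' : e' = a' * (u * w) := by rw [hs'] at h1'; linear_combination h1'
  rw [hs, hs', hp, hp']
  constructor <;> ring

/-- Algebraic core of Proposition 3: the system of Codazzi compatibility equations
for two distinct further principal curvatures `λr, λs` is incompatible. -/
theorem stmt_2 (c l1 l2 lr ls : ℝ) (hc : c ≠ 0)
    (h12 : l1 ≠ l2) (h1r : l1 ≠ lr) (h1s : l1 ≠ ls)
    (h2r : l2 ≠ lr) (h2s : l2 ≠ ls) (hrs : lr ≠ ls) :
    ¬ ∃ b1 b2 : ℝ, b1 ^ 2 + b2 ^ 2 = 1 ∧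
      ∀ lk, lk = lr ∨ lk = ls →
        (3 * c * (l2 - lk) * b1 ^ 2 / (4 * (l1 - lk))
            + 3 * c * (l1 - lk) * b2 ^ 2 / (4 * (l2 - lk))
          = -c / 4 - l1 * (l2 - lk) - l2 * (l1 - lk)) ∧
        ((c / 4 - 3 * c * (lk - l2) / (4 * (lk - l1))) * b1 ^ 2 - (c / 2) * b2 ^ 2
          = (l2 - l1) * lk + l1 * (l2 - lk)) := by
  rintro ⟨b1, b2, hb, h⟩
  -- the two quadratics, for both values of `lk`
  have key : ∀ lk, l1 ≠ lk → l2 ≠ lk → (lk = lr ∨ lk = ls) → _ := fun lk h1 h2 hk =>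
    quadratics_of_system (c := c) (l1 := l1) (d := l2 - l1) (u := l1 - lk) (x := b1 ^ 2)
      (y := b2 ^ 2) (sub_ne_zero.mpr h1)
      (by rw [show l1 - lk + (l2 - l1) = l2 - lk by ring]; exact sub_ne_zero.mpr h2) hb
      (by
        rw [show l1 - lk + (l2 - l1) = l2 - lk by ring, show l1 + (l2 - l1) = l2 by ring]
        exact (h lk hk).1)
      (by
        rw [show l1 - lk + (l2 - l1) = l2 - lk by ring, show -(l2 - lk) = lk - l2 by ring,
          show -(l1 - lk) = lk - l1 by ring, show l1 - (l1 - lk) = lk by ring]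
        exact (h lk hk).2)
  obtain ⟨p1, q1⟩ := key lr h1r h2r (Or.inl rfl)
  obtain ⟨p2, q2⟩ := key ls h1s h2s (Or.inr rfl)
  have hu : l1 - lr ≠ 0 := sub_ne_zero.mpr h1r
  have huw : l1 - lr ≠ l1 - ls := fun e => hrs (by linarith)
  have hd : l2 - l1 ≠ 0 := sub_ne_zero.mpr h12.symm
  clear key h
  generalize l1 - lr = u at *
  generalize l1 - ls = w at *
  generalize l2 - l1 = d at *
  generalize b1 ^ 2 = x at *
  obtain ⟨m1, m2⟩ := coeffs_of_two_roots (a := d - l1) (b := -(c / 2 + 2 * l1 * d))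
    (e := -(3 * c * d * x / 4)) huw (by linear_combination p1) (by linear_combination p2) q1 q2
  have hc' : c = -4 / 3 * (l1 ^ 2 + l1 * d + d ^ 2) := by
    apply mul_left_cancel₀ hd
    linear_combination 2 / 3 * m1
  have hx : 3 * c * d * x / 4 = -(d - l1) ^ 3 / 9 := by
    apply mul_left_cancel₀ hd
    linear_combination m2 / 3 + d * (d - l1) / 12 * hc'
  by_cases ha : d - l1 = 0
  · obtain rfl : l1 = d := by linarith
    have hx0 : c * x = 0 := by
      apply mul_left_cancel₀ hd
      linear_combination 4 / 3 * hx
    have : l1 * u ^ 2 = 0 := by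
      linear_combination q1 / 3 - l1 / 4 * hx0 + (l1 / 12 - u / 6) * hc'
    exact mul_ne_zero hd (pow_ne_zero 2 hu) this
  · -- the first quadratic is `α (u + α / 3) ^ 2` with `α = d - l1`
    have hroot : ∀ t, (d - l1) * t ^ 2 - (c / 2 + 2 * l1 * d) * t - 3 * c * d * x / 4 = 0 →
        t = -(d - l1) / 3 := by
      intro t ht
      have : (d - l1) * (t + (d - l1) / 3) ^ 2 = 0 := by
        linear_combination ht + hx + t / 2 * hc'
      have := pow_eq_zero_iff (two_ne_zero) |>.mp ((mul_eq_zero.mp this).resolve_left ha)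
      linarith
    exact huw ((hroot u p1).trans (hroot w p2).symm)
end

section
/- Let c, λ1, λ2, λ3 be real numbers with c ≠ 0 and λ1, λ2, λ3 pairwise distinct. Suppose b1, b2 are real numbers with b1² + b2² = 1 such that for both choices (i,j) = (1,2) and (i,j) = (2,1) one has c(−λi + 3λj − 2λ3)b_i²/(4(λi−λj)(λ3−λi)) − c·b_j²/(2(λi−λj)) + (2λiλ3 − λjλ3 − λiλj)/(λi−λj) = 0. Then c − 4λ1λ2 + 8λ3(λ1+λ2) − 12λ3² = 0, and b_i² = 4(λj − 2λ3)(λi − λ3)²/(c(λi − λj)) for (i,j) ∈ {(1,2),(2,1)}. -/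
/-! With `p = l1 - l3`, `q = l2 - l3`, the two hypotheses become, after clearing denominators, a linear
system in `(b1², b2²)` of determinant `-3 c² (p - q)² ≠ 0`. Cramer's rule gives
`c (p - q) b1² = 4 p² (q - l3)` and `c (q - p) b2² = 4 q² (p - l3)`, and inserting these in
`b1² + b2² = 1` gives the compatibility relation. -/

/-- Algebraic content of Proposition 5: solving the linear system in `(b1², b2²)`
coming from the equations `0 = A(b_i)` yields explicit formulas for `b_i²`
together with the compatibility relation. -/
theorem stmt_4 (c l1 l2 l3 : ℝ) (hc : c ≠ 0)
    (h12 : l1 ≠ l2) (h13 : l1 ≠ l3) (h23 : l2 ≠ l3)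
    (b1 b2 : ℝ) (hb : b1 ^ 2 + b2 ^ 2 = 1)
    (h1 : c * (-l1 + 3 * l2 - 2 * l3) * b1 ^ 2 / (4 * (l1 - l2) * (l3 - l1))
        - c * b2 ^ 2 / (2 * (l1 - l2))
        + (2 * l1 * l3 - l2 * l3 - l1 * l2) / (l1 - l2) = 0)
    (h2 : c * (-l2 + 3 * l1 - 2 * l3) * b2 ^ 2 / (4 * (l2 - l1) * (l3 - l2))
        - c * b1 ^ 2 / (2 * (l2 - l1))
        + (2 * l2 * l3 - l1 * l3 - l2 * l1) / (l2 - l1) = 0) :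
    c - 4 * l1 * l2 + 8 * l3 * (l1 + l2) - 12 * l3 ^ 2 = 0 ∧
    b1 ^ 2 = 4 * (l2 - 2 * l3) * (l1 - l3) ^ 2 / (c * (l1 - l2)) ∧
    b2 ^ 2 = 4 * (l1 - 2 * l3) * (l2 - l3) ^ 2 / (c * (l2 - l1)) := by
  have n12 : l1 - l2 ≠ 0 := sub_ne_zero.mpr h12
  have n21 : l2 - l1 ≠ 0 := sub_ne_zero.mpr h12.symm
  have n31 : l3 - l1 ≠ 0 := sub_ne_zero.mpr h13.symm
  have n32 : l3 - l2 ≠ 0 := sub_ne_zero.mpr h23.symm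
  have e1 : c * (-l1 + 3 * l2 - 2 * l3) * b1 ^ 2 - 2 * c * (l3 - l1) * b2 ^ 2
      + 4 * (l3 - l1) * (2 * l1 * l3 - l2 * l3 - l1 * l2) = 0 := by
    rw [← mul_zero (4 * (l1 - l2) * (l3 - l1)), ← h1]
    field_simp
    ring
  have e2 : c * (-l2 + 3 * l1 - 2 * l3) * b2 ^ 2 - 2 * c * (l3 - l2) * b1 ^ 2
      + 4 * (l3 - l2) * (2 * l2 * l3 - l1 * l3 - l2 * l1) = 0 := by
    rw [← mul_zero (4 * (l2 - l1) * (l3 - l2)), ← h2]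
    field_simp
    ring
  -- Cramer's rule; one factor `l1 - l2` of the determinant cancels.
  have hx : b1 ^ 2 * (c * (l1 - l2)) = 4 * (l2 - 2 * l3) * (l1 - l3) ^ 2 := by
    apply mul_left_cancel₀ n12
    linear_combination (-1 / 3) * (3 * (l1 - l3) - (l2 - l3)) * e1 + (2 / 3) * (l1 - l3) * e2
  have hy : b2 ^ 2 * (c * (l2 - l1)) = 4 * (l1 - 2 * l3) * (l2 - l3) ^ 2 := by
    apply mul_left_cancel₀ n21
    linear_combination (-1 / 3) * (3 * (l2 - l3) - (l1 - l3)) * e2 + (2 / 3) * (l2 - l3) * e1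
  refine ⟨?_, eq_div_of_mul_eq (mul_ne_zero hc n12) hx, eq_div_of_mul_eq (mul_ne_zero hc n21) hy⟩
  apply mul_left_cancel₀ n12
  linear_combination hx - hy - c * (l1 - l2) * hb
end

section
/- Let c, λ1, λ2, λ3 be real numbers with c ≠ 0 and λ1 ≠ λ2. Suppose that c − 4λ1λ2 + 8(λ1+λ2)λ3 − 12λ3² = 0 and that for both choices (i,j) = (1,2) and (i,j) = (2,1) one has 72λ3³ − 48λiλ3² − 108λjλ3² + 4λi²λ3 + 32λj²λ3 + 72λiλjλ3 − 16λiλj² − cλi − 8λi²λj + cλj = 0. Then λ1 + λ2 = 3λ3. -/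
/-!
Subtracting the two cubic relations and cancelling `l1 - l2` leaves a second quadratic relation.
Its difference with the given quadratic relation is `6 * l3 * (l1 + l2 - 3 * l3) = 0`. In the
degenerate case `l3 = 0`, the cubic relation and `c ≠ 0` force `l1 + l2 = 0`.
-/

/-- Intermediate algebraic step in the proof of Proposition 6:
the two cubic relations together with the quadratic relation force
`λ1 + λ2 = 3λ3`. -/
theorem stmt_5 (c l1 l2 l3 : ℝ) (hc : c ≠ 0) (h12 : l1 ≠ l2)
    (hq : c - 4 * l1 * l2 + 8 * (l1 + l2) * l3 - 12 * l3 ^ 2 = 0)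
    (h1 : 72 * l3 ^ 3 - 48 * l1 * l3 ^ 2 - 108 * l2 * l3 ^ 2 + 4 * l1 ^ 2 * l3
        + 32 * l2 ^ 2 * l3 + 72 * l1 * l2 * l3 - 16 * l1 * l2 ^ 2 - c * l1
        - 8 * l1 ^ 2 * l2 + c * l2 = 0)
    (h2 : 72 * l3 ^ 3 - 48 * l2 * l3 ^ 2 - 108 * l1 * l3 ^ 2 + 4 * l2 ^ 2 * l3
        + 32 * l1 ^ 2 * l3 + 72 * l2 * l1 * l3 - 16 * l2 * l1 ^ 2 - c * l2
        - 8 * l2 ^ 2 * l1 + c * l1 = 0) :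
    l1 + l2 = 3 * l3 := by
  -- The difference of the two cubics is divisible by `l1 - l2`.
  have hdiff : c - 4 * l1 * l2 + 14 * l3 * (l1 + l2) - 30 * l3 ^ 2 = 0 := by
    have hprod : (l1 - l2) * (c - 4 * l1 * l2 + 14 * l3 * (l1 + l2) - 30 * l3 ^ 2) = 0 := by
      linear_combination (h2 - h1) / 2
    exact (mul_eq_zero.mp hprod).resolve_left (sub_ne_zero.mpr h12)
  have hfac : l3 * (l1 + l2 - 3 * l3) = 0 := by
    linear_combination (hdiff - hq) / 6
  rcases mul_eq_zero.mp hfac with h0 | h0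
  · -- If `l3 = 0`, then `c = 4 * l1 * l2` and the cubic reduces to `-3 * c * (l1 + l2) = 0`.
    subst h0
    have hsum : c * (l1 + l2) = 0 := by
      linear_combination -h1 / 3 + (2 * l1 + 4 * l2) / 3 * hq
    linarith [(mul_eq_zero.mp hsum).resolve_left hc]
  · linarith
end

section
/- Let c, λ1, λ2, λ3, λk be real numbers with c ≠ 0, λ1 ≠ λ2, λk ≠ λ1, λk ≠ λ2, λ1 + λ2 = 3λ3, and c − 4λ1λ2 + 8λ3(λ1+λ2) − 12λ3² = 0. Set b_i² = 4(λj − 2λ3)(λi − λ3)²/(c(λi − λj)) for (i,j) ∈ {(1,2),(2,1)}. Then c·b1²/(4(λk − λ1)) + c·b2²/(4(λk − λ2)) − λk = (λ3 − λk)³/((λk − λ1)(λk − λ2)). -/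
/-!
Put `a = l1 - l3`, `b = l2 - l3`, `x = lk - l3`. The sum condition gives `l3 = a + b`,
`l2 - 2 * l3 = -a` and `l1 - 2 * l3 = -b`, so the claim is the negative of the partial fraction
decomposition
`x³ / ((x - a) (x - b)) = x + a + b + a³ / ((a - b) (x - a)) + b³ / ((b - a) (x - b))`.
-/

/-- Algebraic core of Corollary 7: the coefficient multiplying `⟨JV_k, W_k⟩` in
the derived Codazzi relation equals `(λ3−λk)³/((λk−λ1)(λk−λ2))`. -/
theorem stmt_9 (c l1 l2 l3 lk : ℝ) (hc : c ≠ 0) (h12 : l1 ≠ l2)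
    (hk1 : lk ≠ l1) (hk2 : lk ≠ l2)
    (hsum : l1 + l2 = 3 * l3)
    (hq : c - 4 * l1 * l2 + 8 * l3 * (l1 + l2) - 12 * l3 ^ 2 = 0)
    (b1sq b2sq : ℝ)
    (hb1 : b1sq = 4 * (l2 - 2 * l3) * (l1 - l3) ^ 2 / (c * (l1 - l2)))
    (hb2 : b2sq = 4 * (l1 - 2 * l3) * (l2 - l3) ^ 2 / (c * (l2 - l1))) :
    c * b1sq / (4 * (lk - l1)) + c * b2sq / (4 * (lk - l2)) - lk
      = (l3 - lk) ^ 3 / ((lk - l1) * (lk - l2)) := by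
  have h1 : lk - l1 ≠ 0 := sub_ne_zero.mpr hk1
  have h2 : lk - l2 ≠ 0 := sub_ne_zero.mpr hk2
  have h3 : l1 - l2 ≠ 0 := sub_ne_zero.mpr h12
  have e1 : c * b1sq / (4 * (lk - l1)) = -(l1 - l3) ^ 3 / ((l1 - l2) * (lk - l1)) := by
    rw [hb1, show l2 - 2 * l3 = -(l1 - l3) by linarith]
    field_simp
  have e2 : c * b2sq / (4 * (lk - l2)) = (l2 - l3) ^ 3 / ((l1 - l2) * (lk - l2)) := by
    rw [hb2, show l1 - 2 * l3 = -(l2 - l3) by linarith, show l2 - l1 = -(l1 - l2) by ring]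
    field_simp
  rw [e1, e2]
  field_simp
  -- Eliminating `l3` leaves a polynomial identity in independent variables.
  obtain rfl : l3 = (l1 + l2) / 3 := by linarith
  ring
end

section
/- Let c < 0 and 0 ≤ λ3 < √(−c)/2. Set D = −c − 3λ3², λ1 = (3λ3 − √D)/2, λ2 = (3λ3 + √D)/2, b1² = −(−λ3 + √D)³/(2c√D), b2² = −(λ3 + √D)³/(2c√D), and let r ≥ 0 satisfy tanh(r√(−c)/2) = 2λ3/√(−c). Define f_λ(t) = cosh(t√(−c)/2) − (2λ/√(−c))sinh(t√(−c)/2) and g_λ(t) = (cosh(t√(−c)/2) − 1)(1 + 2cosh(t√(−c)/2) − (2λ/√(−c))sinh(t√(−c)/2)). Then (f_{λ1}(r) + b1²·g_{λ1}(r))·(f_{λ2}(r) + b2²·g_{λ2}(r)) − b1²·b2²·g_{λ1}(r)·g_{λ2}(r) = 1/cosh³(r√(−c)/2). -/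
/-!
Rescale by `s = √(-c)`: put `l = l3 / s`, `d = √D / s` and `C = cosh (r s / 2)`. Then
`sinh (r s / 2) = 2 l C`, `C² (1 - 4 l²) = 1` and `d² = 1 - 3 l²`, and the values at `r` become
`f_i = C u_i`, `g_i = (C - 1) (1 + C + C u_i)` with `u₁ = (d - l) (d + 3 l)` and
`u₂ = (d + l) (d - 3 l)`. The products `b₁² b₂² g₁ g₂` cancel in the determinant, so it depends
only on the symmetric expressions `u₁ u₂`, `b₁² + b₂²` and `b₁² u₂ + b₂² u₁`, which are even in
`d` and hence polynomials in `l²`. The determinant reduces to `C (1 - 4 l²)² = 1 / C³`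
(`det_rescaled`).
-/

/-- The determinant identity in the rescaled variables; `p` and `q` stand for `b₁²` and `b₂²`. -/
lemma det_rescaled {l d C p q : ℝ} (hd0 : d ≠ 0) (hd : d ^ 2 = 1 - 3 * l ^ 2)
    (hC : C ^ 2 * (1 - 4 * l ^ 2) = 1)
    (hp : p = (d - l) ^ 3 / (2 * d)) (hq : q = (d + l) ^ 3 / (2 * d)) :
    (C * ((d - l) * (d + 3 * l)) + p * ((C - 1) * (1 + C + C * ((d - l) * (d + 3 * l)))))
        * (C * ((d + l) * (d - 3 * l)) + q * ((C - 1) * (1 + C + C * ((d + l) * (d - 3 * l)))))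
      - p * q * ((C - 1) * (1 + C + C * ((d - l) * (d + 3 * l))))
        * ((C - 1) * (1 + C + C * ((d + l) * (d - 3 * l))))
      = 1 / C ^ 3 := by
  have hC0 : C ≠ 0 := by
    rintro rfl
    norm_num at hC
  have hsum : p + q = 1 := by
    have h : p + q = d ^ 2 + 3 * l ^ 2 := by
      rw [hp, hq]
      field_simp
      ring
    rw [h, hd]
    ring
  have hmix : p * ((d + l) * (d - 3 * l)) + q * ((d - l) * (d + 3 * l))
      = (1 - 4 * l ^ 2) * (1 + 4 * l ^ 2) := by
    have h : p * ((d + l) * (d - 3 * l)) + q * ((d - l) * (d + 3 * l))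
        = (d ^ 2 - l ^ 2) * (d ^ 2 + 7 * l ^ 2) := by
      rw [hp, hq]
      field_simp
      ring
    rw [h, hd]
    ring
  have hprod : ((d - l) * (d + 3 * l)) * ((d + l) * (d - 3 * l))
      = (1 - 4 * l ^ 2) * (1 - 12 * l ^ 2) := by
    have h : ((d - l) * (d + 3 * l)) * ((d + l) * (d - 3 * l))
        = (d ^ 2 - l ^ 2) * (d ^ 2 - 9 * l ^ 2) := by ring
    rw [h, hd]
    ring
  generalize (d - l) * (d + 3 * l) = u at *
  generalize (d + l) * (d - 3 * l) = v at *
  have hfin : C * (1 - 4 * l ^ 2) ^ 2 = 1 / C ^ 3 := by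
    field_simp
    linear_combination (C ^ 2 * (1 - 4 * l ^ 2) + 1) * hC
  rw [← hfin]
  have hexp : (C * u + p * ((C - 1) * (1 + C + C * u)))
        * (C * v + q * ((C - 1) * (1 + C + C * v)))
      - p * q * ((C - 1) * (1 + C + C * u)) * ((C - 1) * (1 + C + C * v))
      = C ^ 2 * (u * v) + (C - 1) * (C * (1 + C) * (p * v + q * u)
        + C ^ 2 * (u * v) * (p + q)) := by ring
  rw [hexp, hsum, hmix, hprod]
  linear_combination (C * (2 - 8 * l ^ 2)) * hC

/-- The determinant identity `det D(r) = sech³(r√(−c)/2)` for the differential of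
the focal map on the span of `U1, U2`. -/
theorem stmt_17 (c l3 : ℝ) (hc : c < 0) (h3 : 0 ≤ l3)
    (h3' : l3 < Real.sqrt (-c) / 2)
    (D l1 l2 b1sq b2sq r : ℝ)
    (hD : D = -c - 3 * l3 ^ 2)
    (hl1 : l1 = (3 * l3 - Real.sqrt D) / 2)
    (hl2 : l2 = (3 * l3 + Real.sqrt D) / 2)
    (hb1 : b1sq = -(-l3 + Real.sqrt D) ^ 3 / (2 * c * Real.sqrt D))
    (hb2 : b2sq = -(l3 + Real.sqrt D) ^ 3 / (2 * c * Real.sqrt D))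
    (hr0 : 0 ≤ r)
    (hr : Real.tanh (r * Real.sqrt (-c) / 2) = 2 * l3 / Real.sqrt (-c))
    (f g : ℝ → ℝ → ℝ)
    (hf : f = fun lam t => Real.cosh (t * Real.sqrt (-c) / 2)
        - (2 * lam / Real.sqrt (-c)) * Real.sinh (t * Real.sqrt (-c) / 2))
    (hg : g = fun lam t => (Real.cosh (t * Real.sqrt (-c) / 2) - 1)
        * (1 + 2 * Real.cosh (t * Real.sqrt (-c) / 2)
          - (2 * lam / Real.sqrt (-c)) * Real.sinh (t * Real.sqrt (-c) / 2))) :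
    (f l1 r + b1sq * g l1 r) * (f l2 r + b2sq * g l2 r)
        - b1sq * b2sq * g l1 r * g l2 r
      = 1 / Real.cosh (r * Real.sqrt (-c) / 2) ^ 3 := by
  have hs : 0 < Real.sqrt (-c) := Real.sqrt_pos.mpr (by linarith)
  have hcs : c = -Real.sqrt (-c) ^ 2 := by
    rw [Real.sq_sqrt (by linarith)]
    ring
  generalize Real.sqrt (-c) = s at *
  have hDpos : 0 < D := by
    rw [hD, hcs]
    nlinarith
  have he : 0 < Real.sqrt D := Real.sqrt_pos.mpr hDpos
  have he2 : Real.sqrt D ^ 2 = s ^ 2 - 3 * l3 ^ 2 := by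
    rw [Real.sq_sqrt hDpos.le, hD, hcs]
    ring
  generalize Real.sqrt D = e at *
  obtain ⟨l, rfl⟩ : ∃ l, l3 = l * s := ⟨l3 / s, by field_simp⟩
  obtain ⟨d, rfl⟩ : ∃ d, e = d * s := ⟨e / s, by field_simp⟩
  have hd0 : d ≠ 0 := by
    rintro rfl
    simp at he
  have hd : d ^ 2 = 1 - 3 * l ^ 2 := by
    have : s ^ 2 ≠ 0 := by positivity
    apply mul_right_cancel₀ this
    linear_combination he2
  have hcosh := Real.cosh_pos (r * s / 2)
  have hS : Real.sinh (r * s / 2) = 2 * l * Real.cosh (r * s / 2) := by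
    rw [Real.tanh_eq_sinh_div_cosh, div_eq_iff hcosh.ne'] at hr
    rw [hr]
    field_simp
  have hC : Real.cosh (r * s / 2) ^ 2 * (1 - 4 * l ^ 2) = 1 := by
    have h := Real.cosh_sq_sub_sinh_sq (r * s / 2)
    rw [hS] at h
    linear_combination h
  have hp : b1sq = (d - l) ^ 3 / (2 * d) := by
    rw [hb1, hcs]
    field_simp
    ring
  have hq : b2sq = (d + l) ^ 3 / (2 * d) := by
    rw [hb2, hcs]
    field_simp
    ring
  have hl1' : 2 * l1 / s = 3 * l - d := by
    rw [hl1]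
    field_simp
  have hl2' : 2 * l2 / s = 3 * l + d := by
    rw [hl2]
    field_simp
  rw [← det_rescaled hd0 hd hC hp hq]
  simp only [hf, hg, hl1', hl2', hS]
  generalize Real.cosh (r * s / 2) = C
  -- `1 - 2 l (3 l ∓ d) = (d ∓ l) (d ± 3 l)` modulo `d² = 1 - 3 l²`
  have h1 : C - (3 * l - d) * (2 * l * C) = C * ((d - l) * (d + 3 * l)) := by
    linear_combination -C * hd
  have h2 : C - (3 * l + d) * (2 * l * C) = C * ((d + l) * (d - 3 * l)) := by
    linear_combination -C * hd
  rw [← h1, ← h2]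
  ring
end

section
/- Let c < 0 and 0 ≤ λ3 < √(−c)/2. Set D = −c − 3λ3², λ1 = (3λ3 − √D)/2, λ2 = (3λ3 + √D)/2, b1 = (−(−λ3 + √D)³/(2c√D))^{1/2}, b2 = (−(λ3 + √D)³/(2c√D))^{1/2}, and let r ≥ 0 satisfy tanh(r√(−c)/2) = 2λ3/√(−c). Define f_λ(t) = cosh(t√(−c)/2) − (2λ/√(−c))sinh(t√(−c)/2), g_λ(t) = (cosh(t√(−c)/2) − 1)(1 + 2cosh(t√(−c)/2) − (2λ/√(−c))sinh(t√(−c)/2)), and let D(t) be the 2×2 real matrix with rows (f_{λ1}(t) + b1²g_{λ1}(t), b1b2·g_{λ2}(t)) and (b1b2·g_{λ1}(t), f_{λ2}(t) + b2²g_{λ2}(t)). Then D(r) is invertible and −D'(r)·D(r)⁻¹ = (√(−c)/2)·M, where M is the 2×2 matrix with rows (−2b1b2, b1² − b2²) and (b1² − b2², 2b1b2), and D'(r) denotes the entrywise derivative of D at r. -/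
/-!
Write `k = √(-c)`, `d = √D` and `q = √(k² - 4λ₃²)`, so that `k² = d² + 3λ₃²` and `q² = d² - λ₃²`.
The condition `tanh (rk/2) = 2λ₃/k` gives `cosh (rk/2) = k/q` and `sinh (rk/2) = 2λ₃/q`
(`cosh_sinh_of_tanh`), while `b₁² = (d-λ₃)³/(2k²d)`, `b₂² = (d+λ₃)³/(2k²d)` and
`b₁b₂ = q³/(2k²d)`. All entries of `D(r)` and `D'(r)` are therefore rational functions of
`λ₃, d, k, q`, and the two quadratic relations above reduce everything to polynomial identities:
`det D(r) = (q/k)³ ≠ 0` (`det_closed`) and `-D'(r) = (k/2) M D(r)` (`entries`).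
-/

/-- Recovers `cosh x` and `sinh x` from the value of `tanh x` that defines the focal radius. -/
theorem cosh_sinh_of_tanh {x k l q : ℝ} (hk : 0 < k) (hq : 0 < q)
    (hq2 : q ^ 2 = k ^ 2 - 4 * l ^ 2) (h : Real.tanh x = 2 * l / k) :
    Real.cosh x = k / q ∧ Real.sinh x = 2 * l / q := by
  have hC := Real.cosh_pos x
  have h1 := Real.cosh_sq_sub_sinh_sq x
  rw [Real.tanh_eq_sinh_div_cosh, div_eq_div_iff hC.ne' hk.ne'] at h
  have h2 : (Real.cosh x * q) ^ 2 = k ^ 2 := by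
    linear_combination k ^ 2 * h1 + Real.cosh x ^ 2 * hq2
      + (Real.sinh x * k + 2 * l * Real.cosh x) * h
  have h3 : Real.cosh x * q = k :=
    (pow_left_inj₀ (by positivity) hk.le two_ne_zero).mp h2
  refine ⟨by rw [eq_div_iff hq.ne', h3], ?_⟩
  rw [eq_div_iff hq.ne']
  apply mul_right_cancel₀ hk.ne'
  linear_combination q * h + 2 * l * h3

/-- Closed form of `det D(r) = f₁f₂ + b₁²g₁f₂ + b₂²g₂f₁`, where `Aᵢ = f_{λᵢ}(r)`, `Gᵢ = g_{λᵢ}(r)`,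
`Bᵢ = bᵢ²`, `P = b₁b₂`, `k = √(-c)`, `d = √D` and `q = √(-c - 4λ₃²)`. -/
theorem det_closed {k l d q A1 A2 G1 G2 B1 B2 P : ℝ} (hk : 0 < k) (hd : 0 < d) (hq : 0 < q)
    (hkd : k ^ 2 = d ^ 2 + 3 * l ^ 2) (hqd : q ^ 2 = d ^ 2 - l ^ 2)
    (hA1 : A1 = (d - l) * (d + 3 * l) / (k * q))
    (hA2 : A2 = (d + l) * (d - 3 * l) / (k * q))
    (hG1 : G1 = (k / q - 1) * (1 + k / q + A1))
    (hG2 : G2 = (k / q - 1) * (1 + k / q + A2))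
    (hB1 : B1 = (d - l) ^ 3 / (2 * k ^ 2 * d))
    (hB2 : B2 = (d + l) ^ 3 / (2 * k ^ 2 * d))
    (hP : P ^ 2 = B1 * B2) :
    (A1 + B1 * G1) * (A2 + B2 * G2) - P * G2 * (P * G1) = (q / k) ^ 3 := by
  -- By `P² = B₁B₂` the `G₁G₂` terms cancel, leaving an expression linear in each `Gᵢ`.
  have : (A1 + B1 * G1) * (A2 + B2 * G2) - P * G2 * (P * G1)
    = A1 * A2 + B2 * G2 * A1 + B1 * G1 * A2 := by linear_combination - G1 * G2 * hP
  rw [this]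
  subst hG1 hG2 hB1 hB2 hA1 hA2
  field_simp
  grind

/-- The four entries of `(2/k) D'(r) = -M D(r)`, in the notation of `det_closed`; the primed letters
are `2/k` times the derivatives of `f_{λᵢ}` and `g_{λᵢ}` at `r`. -/
theorem entries {k l d q A1 A2 A1' A2' G1 G2 G1' G2' B1 B2 P : ℝ}
    (hk : 0 < k) (hd : 0 < d) (hq : 0 < q)
    (hkd : k ^ 2 = d ^ 2 + 3 * l ^ 2) (hqd : q ^ 2 = d ^ 2 - l ^ 2)
    (hA1 : A1 = (d - l) * (d + 3 * l) / (k * q))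
    (hA2 : A2 = (d + l) * (d - 3 * l) / (k * q))
    (hA1' : A1' = (d - l) / q)
    (hA2' : A2' = - (d + l) / q)
    (hG1 : G1 = (k / q - 1) * (1 + k / q + A1))
    (hG2 : G2 = (k / q - 1) * (1 + k / q + A2))
    (hG1' : G1' = 2 * l / q * (1 + k / q + A1) + (k / q - 1) * (2 * l / q + A1'))
    (hG2' : G2' = 2 * l / q * (1 + k / q + A2) + (k / q - 1) * (2 * l / q + A2'))
    (hB1 : B1 = (d - l) ^ 3 / (2 * k ^ 2 * d))
    (hB2 : B2 = (d + l) ^ 3 / (2 * k ^ 2 * d))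
    (hP : P = q ^ 3 / (2 * k ^ 2 * d)) :
    A1' + B1 * G1' = 2 * P * (A1 + B1 * G1) - (B1 - B2) * (P * G1) ∧
    P * G2' = 2 * P * (P * G2) - (B1 - B2) * (A2 + B2 * G2) ∧
    P * G1' = - (B1 - B2) * (A1 + B1 * G1) - 2 * P * (P * G1) ∧
    A2' + B2 * G2' = - (B1 - B2) * (P * G2) - 2 * P * (A2 + B2 * G2) := by
  subst hG1 hG2 hG1' hG2' hB1 hB2 hA1 hA2 hA1' hA2' hP
  refine ⟨?_, ?_, ?_, ?_⟩
  · field_simp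
    grind
  · field_simp
    grind
  · field_simp
    grind
  · field_simp
    grind

/-- The shape operator matrix `C(r) = −D'(r)D(r)⁻¹` of the focal set on the span
of `U1, U2` equals `(√(−c)/2)·M` with `M = !![−2b1b2, b1²−b2²; b1²−b2², 2b1b2]`. -/
theorem stmt_18 (c l3 : ℝ) (hc : c < 0) (h3 : 0 ≤ l3)
    (h3' : l3 < Real.sqrt (-c) / 2)
    (D l1 l2 b1 b2 r : ℝ)
    (hD : D = -c - 3 * l3 ^ 2)
    (hl1 : l1 = (3 * l3 - Real.sqrt D) / 2)
    (hl2 : l2 = (3 * l3 + Real.sqrt D) / 2)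
    (hb1 : b1 = (-(-l3 + Real.sqrt D) ^ 3 / (2 * c * Real.sqrt D)) ^ ((1 : ℝ) / 2))
    (hb2 : b2 = (-(l3 + Real.sqrt D) ^ 3 / (2 * c * Real.sqrt D)) ^ ((1 : ℝ) / 2))
    (hr0 : 0 ≤ r)
    (hr : Real.tanh (r * Real.sqrt (-c) / 2) = 2 * l3 / Real.sqrt (-c))
    (f g : ℝ → ℝ → ℝ)
    (hf : f = fun lam t => Real.cosh (t * Real.sqrt (-c) / 2)
        - (2 * lam / Real.sqrt (-c)) * Real.sinh (t * Real.sqrt (-c) / 2))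
    (hg : g = fun lam t => (Real.cosh (t * Real.sqrt (-c) / 2) - 1)
        * (1 + 2 * Real.cosh (t * Real.sqrt (-c) / 2)
          - (2 * lam / Real.sqrt (-c)) * Real.sinh (t * Real.sqrt (-c) / 2)))
    (Dm : ℝ → Matrix (Fin 2) (Fin 2) ℝ)
    (hDm : Dm = fun t =>
      !![f l1 t + b1 ^ 2 * g l1 t, b1 * b2 * g l2 t;
         b1 * b2 * g l1 t, f l2 t + b2 ^ 2 * g l2 t])
    (D' : Matrix (Fin 2) (Fin 2) ℝ)
    (hD' : D' = Matrix.of fun i j => deriv (fun t => Dm t i j) r) :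
    IsUnit (Dm r) ∧
    -D' * (Dm r)⁻¹
      = (Real.sqrt (-c) / 2) •
          !![-2 * b1 * b2, b1 ^ 2 - b2 ^ 2;
             b1 ^ 2 - b2 ^ 2, 2 * b1 * b2] := by
  set k := Real.sqrt (-c) with hkdef
  have hk : 0 < k := Real.sqrt_pos.mpr (by linarith)
  have hk2 : k ^ 2 = -c := Real.sq_sqrt (by linarith)
  have hDpos : 0 < D := by rw [hD, ← hk2]; nlinarith
  set d := Real.sqrt D with hddef
  have hd : 0 < d := Real.sqrt_pos.mpr hDpos
  have hd2 : d ^ 2 = D := Real.sq_sqrt hDpos.le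
  have hkd : k ^ 2 = d ^ 2 + 3 * l3 ^ 2 := by rw [hd2, hD, hk2]; ring
  have hq0 : 0 < k ^ 2 - 4 * l3 ^ 2 := by nlinarith
  obtain ⟨q, hq, hq2⟩ : ∃ q : ℝ, 0 < q ∧ q ^ 2 = k ^ 2 - 4 * l3 ^ 2 :=
    ⟨_, Real.sqrt_pos.mpr hq0, Real.sq_sqrt hq0.le⟩
  have hqd : q ^ 2 = d ^ 2 - l3 ^ 2 := by linarith
  have hld : l3 < d := by nlinarith
  obtain ⟨hC, hS⟩ := cosh_sinh_of_tanh hk hq hq2 hr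
  have hck : c = -k ^ 2 := by linarith
  have e1 : -(-l3 + d) ^ 3 / (2 * c * d) = (d - l3) ^ 3 / (2 * k ^ 2 * d) := by
    rw [hck]; field_simp; ring
  have e2 : -(l3 + d) ^ 3 / (2 * c * d) = (d + l3) ^ 3 / (2 * k ^ 2 * d) := by
    rw [hck]; field_simp; ring
  have p1 : 0 < (d - l3) ^ 3 / (2 * k ^ 2 * d) := by
    have := sub_pos.mpr hld
    positivity
  have p2 : 0 < (d + l3) ^ 3 / (2 * k ^ 2 * d) := by positivity
  rw [e1, ← Real.sqrt_eq_rpow] at hb1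
  rw [e2, ← Real.sqrt_eq_rpow] at hb2
  have hB1 : b1 ^ 2 = (d - l3) ^ 3 / (2 * k ^ 2 * d) := by rw [hb1, Real.sq_sqrt p1.le]
  have hB2 : b2 ^ 2 = (d + l3) ^ 3 / (2 * k ^ 2 * d) := by rw [hb2, Real.sq_sqrt p2.le]
  have hP : b1 * b2 = q ^ 3 / (2 * k ^ 2 * d) := by
    have h1 : 0 ≤ b1 := hb1 ▸ Real.sqrt_nonneg _
    have h2 : 0 ≤ b2 := hb2 ▸ Real.sqrt_nonneg _
    refine (pow_left_inj₀ (by positivity) (by positivity) two_ne_zero).mp ?_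
    rw [mul_pow, hB1, hB2, div_pow, show (q ^ 3) ^ 2 = (q ^ 2) ^ 3 by ring, hqd]
    field_simp
    ring
  have hA1 : f l1 r = (d - l3) * (d + 3 * l3) / (k * q) := by
    simp only [hf, hC, hS, hl1]
    field_simp
    linear_combination hkd
  have hA2 : f l2 r = (d + l3) * (d - 3 * l3) / (k * q) := by
    simp only [hf, hC, hS, hl2]
    field_simp
    linear_combination hkd
  have hG (a : ℝ) : g a r = (k / q - 1) * (1 + k / q + f a r) := by
    simp only [hf, hg, hC, hS]
    ring
  have hx : HasDerivAt (fun t : ℝ => t * k / 2) (k / 2) r := by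
    simpa using ((hasDerivAt_id r).mul_const k).div_const 2
  have hch := hx.cosh
  have hsh := hx.sinh
  rw [hS] at hch
  rw [hC] at hsh
  have hf' (a : ℝ) : HasDerivAt (f a) (k / 2 * (2 * l3 / q - 2 * a / q)) r := by
    rw [hf]
    refine (hch.sub (hsh.const_mul (2 * a / k))).congr_deriv ?_
    field_simp
  have hg' (a : ℝ) : HasDerivAt (g a) (k / 2 * (2 * l3 / q * (1 + k / q + f a r)
      + (k / q - 1) * (2 * l3 / q + (2 * l3 / q - 2 * a / q)))) r := by
    have hga : g a = fun t => (Real.cosh (t * k / 2) - 1)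
        * (1 + Real.cosh (t * k / 2) + f a t) := by
      simp only [hf, hg]
      funext t
      ring
    rw [hga]
    refine ((hch.sub_const 1).mul ((hch.const_add 1).add (hf' a))).congr_deriv ?_
    simp only [Pi.add_apply, hC]
    ring
  have hdet : (Dm r).det = (q / k) ^ 3 := by
    rw [hDm, Matrix.det_fin_two_of]
    exact det_closed hk hd hq hkd hqd hA1 hA2 (hG l1) (hG l2) hB1 hB2 (by ring)
  have hunit : IsUnit (Dm r).det := by
    rw [hdet]
    exact (pow_pos (div_pos hq hk) 3).ne'.isUnit
  refine ⟨(Matrix.isUnit_iff_isUnit_det _).mpr hunit, ?_⟩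
  obtain ⟨E1, E2, E3, E4⟩ := entries (A1' := 2 * l3 / q - 2 * l1 / q)
    (A2' := 2 * l3 / q - 2 * l2 / q) hk hd hq hkd hqd hA1 hA2
    (by rw [hl1]; ring) (by rw [hl2]; ring) (hG l1) (hG l2) rfl rfl hB1 hB2 hP
  have d11 : D' 0 0 = _ := Eq.trans (by rw [hD', hDm]; rfl)
    ((hf' l1).add ((hg' l1).const_mul (b1 ^ 2))).deriv
  have d12 : D' 0 1 = _ := Eq.trans (by rw [hD', hDm]; rfl)
    ((hg' l2).const_mul (b1 * b2)).deriv
  have d21 : D' 1 0 = _ := Eq.trans (by rw [hD', hDm]; rfl)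
    ((hg' l1).const_mul (b1 * b2)).deriv
  have d22 : D' 1 1 = _ := Eq.trans (by rw [hD', hDm]; rfl)
    ((hf' l2).add ((hg' l2).const_mul (b2 ^ 2))).deriv
  have key : -D' = ((k / 2) • !![-2 * b1 * b2, b1 ^ 2 - b2 ^ 2;
      b1 ^ 2 - b2 ^ 2, 2 * b1 * b2]) * Dm r := by
    ext i j
    fin_cases i <;> fin_cases j
    · simp [d11, hDm, Matrix.mul_apply, Fin.sum_univ_two]
      linear_combination -(k / 2) * E1
    · simp [d12, hDm, Matrix.mul_apply, Fin.sum_univ_two]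
      linear_combination -(k / 2) * E2
    · simp [d21, hDm, Matrix.mul_apply, Fin.sum_univ_two]
      linear_combination -(k / 2) * E3
    · simp [d22, hDm, Matrix.mul_apply, Fin.sum_univ_two]
      linear_combination -(k / 2) * E4
  rw [key, Matrix.mul_nonsing_inv_cancel_right _ _ hunit]
end
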